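/- Let A = {0,1,2} and N = 10, and for K ≥ 0 let m(K) denote the minimum, over all subsets Y of A^{N+K} of cardinality 3^N, of the average (1/3^N) · Σ_{y ∈ Y} I(y) of empirical information content, where I(s) = −Σ_{j=1}^{L} log₂(n_{s_j}/L) for a string s of length L with symbol counts n_a. Then m(K) is strictly decreasing for K = 0,1,2,3,4: m(0) > m(1) > m(2) > m(3) > m(4). -/

import Mathlib

open Finset

/-- Empirical information content of a string `s` of length `L` over an alphabet `A`:
`I(s) = -∑_{j=1}^{L} log₂ (n_{s_j} / L)`, where `n_a` is the number of occurrences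
of the symbol `a` in `s`. -/
noncomputable def info {A : Type*} [DecidableEq A] {L : ℕ} (s : Fin L → A) : ℝ :=
  -∑ j : Fin L, Real.logb 2 (((univ.filter fun i => s i = s j).card : ℝ) / L)

/-- `m K` is the minimum, over all subsets `Y` of `A^{10+K}` (with `A = {0,1,2}`)
of cardinality `3^10`, of the average empirical information content
`(1/3^10) · ∑_{y ∈ Y} I(y)`. -/
noncomputable def m (K : ℕ) : ℝ :=
  ((univ : Finset (Fin (10 + K) → Fin 3)).powersetCard (3 ^ 10)).inf'
    (Finset.powersetCard_nonempty.mpr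
      (by
        simp only [Finset.card_univ, Fintype.card_fun, Fintype.card_fin]
        exact Nat.pow_le_pow_right (by norm_num) (by omega)))
    (fun Y => (∑ y ∈ Y, info y) / 3 ^ 10)

/-!
The information content of `s` is `L log₂ L - ∑ₐ nₐ log₂ nₐ`, so it depends only on the type of `s`,
i.e. on its symbol counts, and each type `k` is shared by a multinomial coefficient of strings.
Rounding down every `100 · n log₂ n` makes the contents of all strings integers, at the price of an
error of at most `1` above and `3` below. The minimal sum of these integers over `3 ^ 10` strings is
a greedy one: it takes all types below a threshold and part of those at it. For `K ≤ 4` the greedy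
minima differ by more than the total rounding error `4 · 3 ^ 10`.
-/

section MinSum

variable {α R : Type*} {n : ℕ}

/-- `v` is the least value of `∑ x ∈ Y, f x` over the sets `Y` of exactly `n` elements. -/
def IsMinSum [AddCommMonoid R] [Preorder R] (f : α → R) (n : ℕ) (v : R) : Prop :=
  IsLeast ((fun Y : Finset α ↦ ∑ x ∈ Y, f x) '' {Y | #Y = n}) v

lemma IsMinSum.map {S : Type*} [AddCommMonoid R] [Preorder R] [AddCommMonoid S] [Preorder S]
    {f : α → R} {v : R} (h : IsMinSum f n v) {φ : R →+ S} (hφ : Monotone φ) :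
    IsMinSum (fun x ↦ φ (f x)) n (φ v) := by
  simpa only [IsMinSum, Set.image_image, map_sum] using hφ.map_isLeast h

lemma IsMinSum.le_add [AddCommMonoid R] [PartialOrder R] [IsOrderedAddMonoid R]
    {f g : α → R} {v w c : R} (hf : IsMinSum f n v) (hg : IsMinSum g n w)
    (hfg : ∀ x, f x ≤ g x + c) : v ≤ w + n • c := by
  obtain ⟨Y, rfl, rfl⟩ := hg.1
  calc v ≤ ∑ x ∈ Y, f x := hf.2 ⟨Y, rfl, rfl⟩
    _ ≤ ∑ x ∈ Y, (g x + c) := sum_le_sum fun x _ ↦ hfg x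
    _ = ∑ x ∈ Y, g x + #Y • c := by rw [sum_add_distrib, sum_const]

-- Complementary slackness: `∑ x ∈ Y, (t - f x) ≤ ∑ x, (t - f x)⁺`, with equality when `Y` contains
-- every `x` with `f x < t` and none with `t < f x`.
lemma isMinSum_of_threshold [Fintype α] [AddCommGroup R] [LinearOrder R] [IsOrderedAddMonoid R]
    {f : α → R} {t : R} (hlt : #{x | f x < t} ≤ n) (hle : n ≤ #{x | f x ≤ t}) :
    IsMinSum f n (n • t - ∑ x, (t - f x)⁺) := by
  have sum_eq (Y : Finset α) : ∑ x ∈ Y, f x = #Y • t - ∑ x ∈ Y, (t - f x) := by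
    simp only [sum_sub_distrib, sum_const, sub_sub_cancel]
  constructor
  · obtain ⟨Y, hltY, hYle, rfl⟩ := exists_subsuperset_card_eq
      (monotone_filter_right univ fun _ _ ↦ le_of_lt) hlt hle
    refine ⟨Y, rfl, ?_⟩
    have le_of_mem : ∀ x ∈ Y, f x ≤ t := fun x hx ↦ (mem_filter.mp (hYle hx)).2
    have le_of_notMem : ∀ x ∉ Y, t ≤ f x := fun x hx ↦
      not_lt.mp fun hxt ↦ hx (hltY (mem_filter.mpr ⟨mem_univ x, hxt⟩))
    calc ∑ x ∈ Y, f x = #Y • t - ∑ x ∈ Y, (t - f x)⁺ := by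
          rw [sum_eq, sum_congr rfl fun x hx ↦ posPart_of_nonneg (sub_nonneg.2 (le_of_mem x hx))]
      _ = #Y • t - ∑ x, (t - f x)⁺ := by
          rw [sum_subset (subset_univ Y) fun x _ hx ↦
            posPart_of_nonpos (sub_nonpos.2 (le_of_notMem x hx))]
  · rintro _ ⟨Y, rfl, rfl⟩
    have sum_le : ∑ x ∈ Y, (t - f x) ≤ ∑ x, (t - f x)⁺ :=
      (sum_le_sum fun x _ ↦ le_posPart _).trans
        (sum_le_sum_of_subset_of_nonneg (subset_univ Y) fun x _ _ ↦ posPart_nonneg _)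
    simpa only [sum_eq Y] using sub_le_sub_left sum_le _

end MinSum

section Types

variable {A : Type*} [DecidableEq A] {L : ℕ}

/-- The type (vector of symbol counts) of a string. -/
def symbolCount (s : Fin L → A) (a : A) : ℕ := #{i | s i = a}

variable [Fintype A]

lemma symbolCount_mem_piAntidiag (s : Fin L → A) : symbolCount s ∈ piAntidiag univ L := by
  have sum_card_fiber : ∑ a, #{i | s i = a} = L := by
    rw [← card_eq_sum_card_fiberwise fun i _ ↦ mem_univ (s i), card_univ, Fintype.card_fin]
  exact mem_piAntidiag.mpr ⟨sum_card_fiber, fun a _ ↦ mem_univ a⟩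

lemma sum_symbolCount (s : Fin L → A) : ∑ a, symbolCount s a = L :=
  (mem_piAntidiag.mp (symbolCount_mem_piAntidiag s)).1

@[to_additive]
lemma prod_comp_eq_prod_pow_symbolCount {M : Type*} [CommMonoid M] (s : Fin L → A) (f : A → M) :
    ∏ i, f (s i) = ∏ a, f a ^ symbolCount s a := by
  rw [← Fintype.prod_fiberwise' s f]
  simp only [prod_const, symbolCount, card_univ, Fintype.card_subtype]

-- Compare the coefficients of the two expansions of `(∑ a, X a) ^ L`.
lemma card_symbolCount_eq {k : A → ℕ} (hk : k ∈ piAntidiag univ L) :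
    #{s : Fin L → A | symbolCount s = k} = Nat.multinomial univ k := by
  have coeff_prod (j : A → ℕ) : MvPolynomial.coeff (Finsupp.equivFunOnFinite.symm k)
      (∏ a, (MvPolynomial.X a : MvPolynomial A ℕ) ^ j a) = if j = k then 1 else 0 := by
    rw [MvPolynomial.coeff_prod_X_pow]
    simp [Finsupp.ext_iff, funext_iff, eq_comm]
  have expansions := (Fintype.sum_pow (MvPolynomial.X : A → MvPolynomial A ℕ) L).symm.trans
    (sum_pow_eq_sum_piAntidiag univ _ L)
  simp only [prod_comp_eq_prod_pow_symbolCount] at expansions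
  have := congrArg (MvPolynomial.coeff (Finsupp.equivFunOnFinite.symm k)) expansions
  simpa [MvPolynomial.coeff_sum, coeff_prod, ← nsmul_eq_mul, hk] using this

lemma sum_comp_symbolCount {M : Type*} [AddCommMonoid M] (F : (A → ℕ) → M) :
    ∑ s : Fin L → A, F (symbolCount s) =
      ∑ k ∈ piAntidiag univ L, Nat.multinomial univ k • F k := by
  rw [← sum_fiberwise_of_maps_to' fun s _ ↦ symbolCount_mem_piAntidiag s]
  exact sum_congr rfl fun k hk ↦ by rw [sum_const, card_symbolCount_eq hk]

lemma card_filter_symbolCount (p : (A → ℕ) → Prop) [DecidablePred p] :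
    #{s : Fin L → A | p (symbolCount s)} =
      ∑ k ∈ piAntidiag univ L with p k, Nat.multinomial univ k := by
  simp only [card_filter, sum_filter, sum_comp_symbolCount fun k ↦ if p k then 1 else 0,
    smul_eq_mul, mul_ite, mul_one, mul_zero]

lemma isMinSum_comp_symbolCount {R : Type*} [AddCommGroup R] [LinearOrder R]
    [IsOrderedAddMonoid R] {F : (A → ℕ) → R} {n : ℕ} {t v : R}
    (hlt : ∑ k ∈ piAntidiag univ L with F k < t, Nat.multinomial univ k ≤ n)
    (hle : n ≤ ∑ k ∈ piAntidiag univ L with F k ≤ t, Nat.multinomial univ k)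
    (hv : n • t - ∑ k ∈ piAntidiag univ L, Nat.multinomial univ k • (t - F k)⁺ = v) :
    IsMinSum (fun s : Fin L → A ↦ F (symbolCount s)) n v := by
  rw [← hv, ← sum_comp_symbolCount fun k ↦ (t - F k)⁺]
  rw [← card_filter_symbolCount] at hlt hle
  exact isMinSum_of_threshold hlt hle

end Types

section Information

/-- The integer part of `q * (n * log₂ n)`, in a form the kernel can evaluate. -/
def floorMulLog (q n : ℕ) : ℕ := Nat.log 2 (n ^ (q * n))

lemma floorMulLog_eq_floor (q n : ℕ) : floorMulLog q n = ⌊q * (n * Real.logb 2 n)⌋₊ := by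
  rw [floorMulLog, ← Real.natFloor_logb_natCast, Nat.cast_pow, Real.logb_pow, Nat.cast_mul,
    mul_assoc, Nat.cast_ofNat]

lemma floorMulLog_le (q n : ℕ) : (floorMulLog q n : ℝ) ≤ q * (n * Real.logb 2 n) := by
  have logb_nonneg : 0 ≤ Real.logb 2 n := div_nonneg (Real.log_natCast_nonneg n) (by positivity)
  exact floorMulLog_eq_floor q n ▸ Nat.floor_le (by positivity)

lemma lt_floorMulLog_add_one (q n : ℕ) : q * (n * Real.logb 2 n) < floorMulLog q n + 1 :=
  floorMulLog_eq_floor q n ▸ Nat.lt_floor_add_one _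

variable {A : Type*} [Fintype A]

/-- Integer approximation of `q` times the empirical information content of the strings of
type `k`, obtained by rounding down each term `q * (n * log₂ n)` of `info_eq`. -/
def intInfo (q : ℕ) (k : A → ℕ) : ℤ := floorMulLog q (∑ a, k a) - ∑ a, (floorMulLog q (k a) : ℤ)

variable [DecidableEq A] {L : ℕ}

lemma info_eq (s : Fin L → A) :
    info s = L * Real.logb 2 L - ∑ a, symbolCount s a * Real.logb 2 (symbolCount s a) := by
  have logb_freq (j : Fin L) : Real.logb 2 ((symbolCount s (s j) : ℝ) / L) =
      Real.logb 2 (symbolCount s (s j)) - Real.logb 2 L := by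
    have count_ne_zero : symbolCount s (s j) ≠ 0 := card_ne_zero_of_mem (a := j) (by simp)
    exact Real.logb_div (Nat.cast_ne_zero.2 count_ne_zero) (Nat.cast_ne_zero.2 j.pos.ne')
  calc info s = -∑ j, Real.logb 2 ((symbolCount s (s j) : ℝ) / L) := rfl
    _ = L * Real.logb 2 L - ∑ j, Real.logb 2 (symbolCount s (s j)) := by
      simp only [logb_freq, sum_sub_distrib, sum_const, card_univ, Fintype.card_fin,
        nsmul_eq_mul, neg_sub]
    _ = L * Real.logb 2 L - ∑ a, symbolCount s a * Real.logb 2 (symbolCount s a) := by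
      simp only [sum_comp_eq_sum_nsmul_symbolCount s fun a ↦ Real.logb 2 (symbolCount s a),
        nsmul_eq_mul]

lemma mul_info_le_intInfo_add_one (q : ℕ) (s : Fin L → A) :
    q * info s ≤ intInfo q (symbolCount s) + 1 := by
  rw [info_eq, intInfo, sum_symbolCount, mul_sub, mul_sum]
  push_cast
  have := sum_le_sum fun a (_ : a ∈ univ) ↦ floorMulLog_le q (symbolCount s a)
  linarith [lt_floorMulLog_add_one q L]

lemma intInfo_le_mul_info_add_card (q : ℕ) (s : Fin L → A) :
    (intInfo q (symbolCount s) : ℝ) ≤ q * info s + Fintype.card A := by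
  rw [info_eq, intInfo, sum_symbolCount, mul_sub, mul_sum]
  push_cast
  have := sum_le_sum fun a (_ : a ∈ univ) ↦ (lt_floorMulLog_add_one q (symbolCount s a)).le
  rw [sum_add_distrib, sum_const, nsmul_one, card_univ] at this
  linarith [floorMulLog_le q L]

variable {q n : ℕ} {v : ℝ} {w : ℤ}

lemma IsMinSum.mul_le_intInfo_add (hv : IsMinSum (info : (Fin L → A) → ℝ) n v)
    (hw : IsMinSum (fun s : Fin L → A ↦ intInfo q (symbolCount s)) n w) : q * v ≤ w + n := by
  have hqv := hv.map (φ := AddMonoidHom.mulLeft (q : ℝ)) (monotone_mul_left_of_nonneg q.cast_nonneg)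
  simpa using hqv.le_add (hw.map (φ := Int.castAddHom ℝ) Int.cast_mono)
    (mul_info_le_intInfo_add_one q)

lemma IsMinSum.intInfo_le_mul_add (hv : IsMinSum (info : (Fin L → A) → ℝ) n v)
    (hw : IsMinSum (fun s : Fin L → A ↦ intInfo q (symbolCount s)) n w) :
    w ≤ q * v + n * Fintype.card A := by
  have hqv := hv.map (φ := AddMonoidHom.mulLeft (q : ℝ)) (monotone_mul_left_of_nonneg q.cast_nonneg)
  simpa using (hw.map (φ := Int.castAddHom ℝ) Int.cast_mono).le_add hqv
    (intInfo_le_mul_info_add_card q)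

end Information

lemma isMinSum_m (K : ℕ) :
    IsMinSum (info : (Fin (10 + K) → Fin 3) → ℝ) (3 ^ 10) (3 ^ 10 * m K) := by
  let average (Y : Finset (Fin (10 + K) → Fin 3)) : ℝ := (∑ y ∈ Y, info y) / 3 ^ 10
  constructor
  · obtain ⟨Y, hY, m_eq⟩ : ∃ Y ∈ powersetCard (3 ^ 10) univ, m K = average Y :=
      exists_mem_eq_inf' _ average
    exact ⟨Y, (mem_powersetCard.mp hY).2, by simp only [m_eq, average]; field_simp⟩
  · rintro _ ⟨Y, hY, rfl⟩
    have m_le : m K ≤ average Y := inf'_le average (mem_powersetCard.mpr ⟨subset_univ Y, hY⟩)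
    exact (le_div_iff₀' (by positivity)).mp m_le

lemma m_lt_m_of_intInfo {q K K' : ℕ} {w w' : ℤ}
    (hw : IsMinSum (fun s : Fin (10 + K) → Fin 3 ↦ intInfo q (symbolCount s)) (3 ^ 10) w)
    (hw' : IsMinSum (fun s : Fin (10 + K') → Fin 3 ↦ intInfo q (symbolCount s)) (3 ^ 10) w')
    (gap : w + 4 * 3 ^ 10 < w') : m K < m K' := by
  have upper := (isMinSum_m K).mul_le_intInfo_add hw
  have lower := (isMinSum_m K').intInfo_le_mul_add hw'
  have gap_real : (w : ℝ) + 4 * 3 ^ 10 < w' := mod_cast gap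
  push_cast [Fintype.card_fin] at upper lower
  have : (q : ℝ) * m K < q * m K' := by linarith
  exact lt_of_mul_lt_mul_left this q.cast_nonneg

/-- With `A = {0,1,2}` and `N = 10`, the minimal average empirical information content
`m K` is strictly decreasing for `K = 0,1,2,3,4`. -/
theorem stmt_1 : m 0 > m 1 ∧ m 1 > m 2 ∧ m 2 > m 3 ∧ m 3 > m 4 := by
  let cost (K : ℕ) (s : Fin (10 + K) → Fin 3) : ℤ := intInfo 100 (symbolCount s)
  have min0 : IsMinSum (cost 0) (3 ^ 10) 84222726 := isMinSum_comp_symbolCount (t := 1571)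
    (by decide +kernel) (by decide +kernel) (by decide +kernel)
  have min1 : IsMinSum (cost 1) (3 ^ 10) 83512734 := isMinSum_comp_symbolCount (t := 1580)
    (by decide +kernel) (by decide +kernel) (by decide +kernel)
  have min2 : IsMinSum (cost 2) (3 ^ 10) 82671924 := isMinSum_comp_symbolCount (t := 1536)
    (by decide +kernel) (by decide +kernel) (by decide +kernel)
  have min3 : IsMinSum (cost 3) (3 ^ 10) 80893098 := isMinSum_comp_symbolCount (t := 1558)
    (by decide +kernel) (by decide +kernel) (by decide +kernel)
  have min4 : IsMinSum (cost 4) (3 ^ 10) 78703326 := isMinSum_comp_symbolCount (t := 1534)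
    (by decide +kernel) (by decide +kernel) (by decide +kernel)
  exact ⟨m_lt_m_of_intInfo min1 min0 (by norm_num), m_lt_m_of_intInfo min2 min1 (by norm_num),
    m_lt_m_of_intInfo min3 min2 (by norm_num), m_lt_m_of_intInfo min4 min3 (by norm_num)⟩
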